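/- Let G be a countably infinite, locally finite, strongly connected directed graph. For every nonempty subset W ⊆ V(G), the complement of the sheltered hull of W is the union of all horoballs of the reversed graph Ḡ that are disjoint from W: V(G) \ S_G(W) = ⋃ { H : H is a horoball in Ḡ, H ∩ W = ∅ }. -/

import Mathlib

/-!
Membership of `v` in the `r`-sheltered hull of `W` is a statement about balls of the reversed graph:
every `r`-ball of `Ḡ` that contains `v` meets `W`.

If `v` is outside the sheltered hull, then for every `r ≥ 1` some `r`-ball of `Ḡ` contains `v` and
misses `W`. These balls are subsets of their countable union `C`, so by compactness of `{0,1}^C` a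
subsequence of them converges, and the limit is a horoball containing `v` and disjoint from `W`.

Conversely, suppose `W` shelters `v` at radius `r`. As `φ_G^r({v})` is finite, some finite `F ⊆ W`
already shelters `v` at radius `r`, hence at all larger radii. A sequence of balls of `Ḡ` whose
radii tend to infinity and whose limit contains `v` therefore meets `F` from some point on, so by
finiteness of `F` the limit meets `F`, and is not disjoint from `W`.
-/

open Filter Set

/-- The map `φ_G` on subsets of the vertex set of a directed graph with edge
relation `E`: `φ_G(W) = W ∪ {v : ∃ w ∈ W, (w,v) ∈ E}`. -/
def phiG {V : Type*} (E : V → V → Prop) (W : Set V) : Set V :=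
  W ∪ {v | ∃ w ∈ W, E w v}

/-- A directed graph is locally finite if every vertex has finitely many
out-neighbors and finitely many in-neighbors. -/
def LocallyFiniteGraph {V : Type*} (E : V → V → Prop) : Prop :=
  ∀ v : V, {w | E v w}.Finite ∧ {w | E w v}.Finite

/-- A directed graph is strongly connected if every vertex is reachable from
every other vertex by a directed path. -/
def StronglyConnectedGraph {V : Type*} (E : V → V → Prop) : Prop :=
  ∀ v w : V, ∃ n : ℕ, w ∈ (phiG E)^[n] {v}

/-- Convergence of a sequence of subsets in the product topology on
`{0,1}^V`: for every vertex, membership eventually agrees with the limit. -/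
def ConvergesTo {V : Type*} (s : ℕ → Set V) (S : Set V) : Prop :=
  ∀ v : V, ∀ᶠ i in atTop, (v ∈ s i ↔ v ∈ S)

/-- A horoball: a nonempty proper subset of `V` which is a limit of balls
`φ_G^{n_i}({c_i})` with radii `n_i → ∞`. -/
def IsHoroball {V : Type*} (E : V → V → Prop) (H : Set V) : Prop :=
  H.Nonempty ∧ H ≠ univ ∧
    ∃ (c : ℕ → V) (n : ℕ → ℕ), Tendsto n atTop atTop ∧
      ConvergesTo (fun i => (phiG E)^[n i] {c i}) H

/-- A geodesic ray: a sequence `γ` of vertices such that for `i > j` the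
shortest directed path from `γ i` to `γ j` has length exactly `i - j`. -/
def IsGeodesicRay {V : Type*} (E : V → V → Prop) (γ : ℕ → V) : Prop :=
  ∀ i j : ℕ, j < i →
    γ j ∈ (phiG E)^[i - j] {γ i} ∧ ∀ n : ℕ, γ j ∈ (phiG E)^[n] {γ i} → i - j ≤ n

/-- A Busemann ball: a set of the form `⋃ r, φ_G^r({γ r})` for a geodesic ray
`γ`, which is neither empty nor the whole vertex set. -/
def IsBusemannBall {V : Type*} (E : V → V → Prop) (B : Set V) : Prop :=
  B ≠ ∅ ∧ B ≠ univ ∧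
    ∃ γ : ℕ → V, IsGeodesicRay E γ ∧ B = ⋃ r : ℕ, (phiG E)^[r] {γ r}


/-- The `r`-sheltered hull of `W`. -/
def shelR {V : Type*} (E : V → V → Prop) (r : ℕ) (W : Set V) : Set V :=
  {v | (phiG E)^[r] {v} ⊆ (phiG E)^[r] W}

/-- The sheltered hull of `W`: the union of the `r`-sheltered hulls over `r ≥ 1`. -/
def shelHull {V : Type*} (E : V → V → Prop) (W : Set V) : Set V :=
  ⋃ r ∈ {r : ℕ | 1 ≤ r}, shelR E r W

section Ball

variable {V : Type*} {E : V → V → Prop} {A B W : Set V} {r m n : ℕ} {u v : V}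

lemma phiG_inter_nonempty_iff : (phiG E A ∩ B).Nonempty ↔ (A ∩ phiG (flip E) B).Nonempty := by
  constructor
  · rintro ⟨u, hA | ⟨w, hw, h⟩, hB⟩
    · exact ⟨u, hA, Or.inl hB⟩
    · exact ⟨w, hw, Or.inr ⟨u, hB, h⟩⟩
  · rintro ⟨u, hA, hB | ⟨w, hw, h⟩⟩
    · exact ⟨u, Or.inl hA, hB⟩
    · exact ⟨w, Or.inr ⟨u, hA, h⟩, hw⟩

lemma iterate_phiG_inter_nonempty_iff :
    ((phiG E)^[r] A ∩ B).Nonempty ↔ (A ∩ (phiG (flip E))^[r] B).Nonempty := by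
  induction r generalizing A with
  | zero => rfl
  | succ r ih =>
    rw [Function.iterate_succ_apply, Function.iterate_succ_apply', ih, phiG_inter_nonempty_iff]

lemma mem_iterate_phiG_iff :
    u ∈ (phiG E)^[r] W ↔ (W ∩ (phiG (flip E))^[r] {u}).Nonempty := by
  rw [← inter_singleton_nonempty, iterate_phiG_inter_nonempty_iff]

lemma mem_iterate_phiG_singleton_iff :
    u ∈ (phiG E)^[r] {v} ↔ v ∈ (phiG (flip E))^[r] {u} := by
  rw [mem_iterate_phiG_iff, singleton_inter_nonempty]

lemma phiG_mono : Monotone (phiG E) := by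
  rintro A B hAB u (hu | ⟨w, hw, h⟩)
  · exact Or.inl (hAB hu)
  · exact Or.inr ⟨w, hAB hw, h⟩

lemma phiG_eq_union_biUnion : phiG E W = W ∪ ⋃ w ∈ W, {v | E w v} := by
  ext v
  simp [phiG]

lemma finite_iterate_phiG (hE : ∀ v, {w | E v w}.Finite) (hA : A.Finite) :
    ((phiG E)^[r] A).Finite := by
  refine Function.Iterate.rec Set.Finite hA (fun B hB ↦ ?_) r
  rw [phiG_eq_union_biUnion]
  exact hB.union (hB.biUnion fun w _ ↦ hE w)

lemma countable_iterate_phiG (hE : ∀ v, {w | E v w}.Countable) (hA : A.Countable) :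
    ((phiG E)^[r] A).Countable := by
  refine Function.Iterate.rec Set.Countable hA (fun B hB ↦ ?_) r
  rw [phiG_eq_union_biUnion]
  exact hB.union (hB.biUnion fun w _ ↦ hE w)

lemma exists_finite_subset_iterate_phiG (hA : A.Finite) (hAW : A ⊆ (phiG E)^[r] W) :
    ∃ F ⊆ W, F.Finite ∧ A ⊆ (phiG E)^[r] F := by
  have hmeet : ∀ u ∈ A, ∃ w ∈ W, w ∈ (phiG (flip E))^[r] {u} :=
    fun u hu ↦ mem_iterate_phiG_iff.1 (hAW hu)
  choose! f hfW hf using hmeet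
  exact ⟨f '' A, image_subset_iff.2 hfW, hA.image f, fun u hu ↦
    mem_iterate_phiG_iff.2 ⟨f u, mem_image_of_mem f hu, hf u hu⟩⟩

lemma mem_shelR_iff :
    v ∈ shelR E r W ↔
      ∀ c, v ∈ (phiG (flip E))^[r] {c} → (W ∩ (phiG (flip E))^[r] {c}).Nonempty :=
  forall_congr' fun _ ↦ imp_congr mem_iterate_phiG_singleton_iff mem_iterate_phiG_iff

lemma notMem_shelR_iff :
    v ∉ shelR E r W ↔
      ∃ c, v ∈ (phiG (flip E))^[r] {c} ∧ Disjoint ((phiG (flip E))^[r] {c}) W := by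
  simp only [mem_shelR_iff, not_forall, exists_prop, ← not_disjoint_iff_nonempty_inter, not_not,
    disjoint_comm]

lemma shelR_subset_shelR_of_le (hmn : m ≤ n) : shelR E m W ⊆ shelR E n W := by
  intro v hv
  obtain ⟨k, rfl⟩ := Nat.exists_eq_add_of_le' hmn
  simpa only [shelR, mem_ofPred_eq, Function.iterate_add_apply] using phiG_mono.iterate k hv

lemma exists_finite_subset_mem_shelR (hE : ∀ v, {w | E v w}.Finite) (hv : v ∈ shelR E r W) :
    ∃ F ⊆ W, F.Finite ∧ v ∈ shelR E r F :=
  exists_finite_subset_iterate_phiG (finite_iterate_phiG hE (finite_singleton v)) hv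

end Ball

namespace ConvergesTo

variable {V : Type*} {s : ℕ → Set V} {S F W : Set V} {v : V}

lemma mem_of_forall_mem (h : ConvergesTo s S) (hv : ∀ i, v ∈ s i) : v ∈ S := by
  obtain ⟨i, hi⟩ := (h v).exists
  exact hi.1 (hv i)

lemma disjoint_of_forall_disjoint (h : ConvergesTo s S) (hW : ∀ i, Disjoint (s i) W) :
    Disjoint S W := by
  refine disjoint_left.2 fun w hwS hwW ↦ ?_
  obtain ⟨i, hi⟩ := (h w).exists
  exact disjoint_left.1 (hW i) (hi.2 hwS) hwW

lemma eventually_mem (h : ConvergesTo s S) (hv : v ∈ S) : ∀ᶠ i in atTop, v ∈ s i :=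
  (h v).mono fun _ hi ↦ hi.2 hv

lemma eventually_disjoint (h : ConvergesTo s S) (hF : F.Finite) (hSF : Disjoint S F) :
    ∀ᶠ i in atTop, Disjoint (s i) F := by
  have hmem : ∀ᶠ i in atTop, ∀ w ∈ F, (w ∈ s i ↔ w ∈ S) :=
    (eventually_all_finite hF).2 fun w _ ↦ h w
  filter_upwards [hmem] with i hi
  exact disjoint_right.2 fun w hw hwi ↦ disjoint_right.1 hSF hw ((hi w hw).1 hwi)

end ConvergesTo

lemma exists_subseq_convergesTo_of_countable {V : Type*} {s : ℕ → Set V}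
    (hs : ∀ i, (s i).Countable) :
    ∃ (S : Set V) (k : ℕ → ℕ), StrictMono k ∧ ConvergesTo (s ∘ k) S := by
  classical
  let C : Set V := ⋃ i, s i
  have : Countable C := (countable_iUnion hs).to_subtype
  obtain ⟨f, k, hk, hf⟩ := CompactSpace.tendsto_subseq fun i (v : C) ↦ decide (v.1 ∈ s i)
  refine ⟨{v | ∃ hv : v ∈ C, f ⟨v, hv⟩ = true}, k, hk, fun v ↦ ?_⟩
  by_cases hv : v ∈ C
  · have hfv := tendsto_pi_nhds.1 hf ⟨v, hv⟩
    rw [nhds_discrete, tendsto_pure] at hfv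
    filter_upwards [hfv] with i hi
    simp [← hi, hv]
  · exact Eventually.of_forall fun i ↦ iff_of_false (fun h ↦ hv (mem_iUnion_of_mem (k i) h))
      fun h ↦ hv h.1

section Horoball

variable {V : Type*} {E : V → V → Prop} {W H : Set V} {v : V}

lemma exists_isHoroball_mem_disjoint (hE : ∀ v, {w | E v w}.Countable) {c : ℕ → V} {n : ℕ → ℕ}
    (hn : Tendsto n atTop atTop) (hv : ∀ i, v ∈ (phiG E)^[n i] {c i}) (hW : W.Nonempty)
    (hcW : ∀ i, Disjoint ((phiG E)^[n i] {c i}) W) :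
    ∃ H, IsHoroball E H ∧ v ∈ H ∧ Disjoint H W := by
  obtain ⟨H, k, hk, hH⟩ := exists_subseq_convergesTo_of_countable fun i ↦
    countable_iterate_phiG hE (r := n i) (countable_singleton (c i))
  have hvH : v ∈ H := hH.mem_of_forall_mem fun i ↦ hv (k i)
  have hHW : Disjoint H W := hH.disjoint_of_forall_disjoint fun i ↦ hcW (k i)
  have hH_ne : H ≠ univ := by
    rintro rfl
    exact hW.ne_empty (univ_disjoint.1 hHW)
  exact ⟨H, ⟨⟨v, hvH⟩, hH_ne, c ∘ k, n ∘ k, hn.comp hk.tendsto_atTop, hH⟩, hvH, hHW⟩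

lemma exists_isHoroball_of_notMem_shelHull (hin : ∀ v, {w | E w v}.Countable)
    (hW : W.Nonempty) (hv : v ∉ shelHull E W) :
    ∃ H, IsHoroball (flip E) H ∧ v ∈ H ∧ Disjoint H W := by
  have hball : ∀ i : ℕ, ∃ c, v ∈ (phiG (flip E))^[i + 1] {c} ∧
      Disjoint ((phiG (flip E))^[i + 1] {c}) W :=
    fun i ↦ notMem_shelR_iff.1 fun h ↦ hv (mem_biUnion (Nat.le_add_left 1 i) h)
  choose c hvc hcW using hball
  exact exists_isHoroball_mem_disjoint hin (tendsto_add_atTop_nat 1) hvc hW hcW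

lemma IsHoroball.disjoint_shelHull (hE : ∀ v, {w | E v w}.Finite) (hH : IsHoroball (flip E) H)
    (hHW : Disjoint H W) : Disjoint H (shelHull E W) := by
  refine disjoint_left.2 fun v hvH hvW ↦ ?_
  obtain ⟨-, -, c, n, hn, hlim⟩ := hH
  obtain ⟨r, -, hvr⟩ := mem_iUnion₂.1 hvW
  obtain ⟨F, hFW, hF, hvF⟩ := exists_finite_subset_mem_shelR hE hvr
  obtain ⟨i, hvi, hFi, hri⟩ := ((hlim.eventually_mem hvH).and
    ((hlim.eventually_disjoint hF (hHW.mono_right hFW)).and (hn.eventually_ge_atTop r))).exists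
  have hmeet : (F ∩ (phiG (flip E))^[n i] {c i}).Nonempty :=
    mem_shelR_iff.1 (shelR_subset_shelR_of_le hri hvF) (c i) hvi
  exact not_disjoint_iff_nonempty_inter.2 hmeet hFi.symm

theorem compl_shelHull_eq_union_horoballs_general (hout : ∀ v, {w | E v w}.Finite)
    (hin : ∀ v, {w | E w v}.Countable) (hW : W.Nonempty) :
    univ \ shelHull E W = ⋃₀ {H : Set V | IsHoroball (flip E) H ∧ H ∩ W = ∅} := by
  apply Subset.antisymm
  · rintro v ⟨-, hv⟩
    obtain ⟨H, hH, hvH, hHW⟩ := exists_isHoroball_of_notMem_shelHull hin hW hv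
    exact ⟨H, ⟨hH, disjoint_iff_inter_eq_empty.1 hHW⟩, hvH⟩
  · rintro v ⟨H, ⟨hH, hHW⟩, hvH⟩
    have hdisj := hH.disjoint_shelHull hout (disjoint_iff_inter_eq_empty.2 hHW)
    exact ⟨mem_univ v, disjoint_left.1 hdisj hvH⟩

end Horoball

/-- The complement of the sheltered hull of a nonempty set `W` is the union of
all horoballs of the reversed graph that are disjoint from `W`. -/
theorem compl_shelHull_eq_union_horoballs {V : Type*} [Countable V] [Infinite V]
    (E : V → V → Prop) (hLF : LocallyFiniteGraph E)
    (hSC : StronglyConnectedGraph E) (W : Set V) (hW : W.Nonempty) :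
    univ \ shelHull E W =
      ⋃₀ {H : Set V | IsHoroball (flip E) H ∧ H ∩ W = ∅} :=
  compl_shelHull_eq_union_horoballs_general (fun v ↦ (hLF v).1) (fun v ↦ (hLF v).2.countable) hW
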